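/- Let G=(V,E) be a finite undirected graph with m = |E| ≥ 1 edges, let ε ∈ (0,1), and let w⁻, w⁺ be edge-weight vectors with 0 ≤ w⁻ₑ ≤ w⁺ₑ for every e ∈ E. Suppose that ‖w⁺ − w⁻‖_∞ ≤ √(2/m) · ε · D, where D is a real number with 0 < D ≤ max over nonempty S ⊆ V of f_{w⁺}(S). Let S⁻ be a densest subgraph with respect to w⁻. Then for every edge-weight vector w with w⁻ₑ ≤ wₑ ≤ w⁺ₑ for all e ∈ E and every nonempty subset T ⊆ V, it holds that f_w(S⁻) ≥ (1 − ε) · f_w(T); that is, the robust ratio of S⁻ under the edge-weight space ∏_{e∈E}[w⁻ₑ, w⁺ₑ] is at least 1 − ε. -/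

import Mathlib

open Finset
open scoped Classical

/-- The set of edges of `G` whose both endpoints lie in `S`, i.e. `E(S)`. -/
noncomputable def edgesIn {V : Type*} [Fintype V] (G : SimpleGraph V) (S : Finset V) :
    Finset (Sym2 V) :=
  G.edgeFinset.filter (fun e => ∀ v ∈ e, v ∈ S)

/-- The density `f_w(S) = w(S) / |S|` of the subgraph induced by `S`. -/
noncomputable def density {V : Type*} [Fintype V] (G : SimpleGraph V) (w : Sym2 V → ℝ)
    (S : Finset V) : ℝ :=
  (∑ e ∈ edgesIn G S, w e) / (S.card : ℝ)

/-!
An induced subgraph on `s` vertices has `k ≤ s² / 2` edges, and also `k ≤ m`; multiplying the two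
bounds gives `k √(2 / m) ≤ s`. Hence raising every edge weight by at most `√(2 / m) δ` raises every
density by at most `δ`. With `δ = ε D`, the optimum for `w⁻` is then within `ε D` of the optimum
for any `w` between `w⁻` and `w⁺`. As `D` is at most the optimum for `w⁺`, the optimum for `w⁻` is
at least `(1 - ε) D`, which turns the additive loss `ε D` into the factor `1 - ε`.
-/

/-- `S` is a densest subgraph with respect to the edge weights `w`: a nonempty vertex set of
maximum density. Nonemptiness is required because `density` takes the junk value `0` at `∅`. -/
structure IsDensestSubgraph {V : Type*} [Fintype V] (G : SimpleGraph V) (w : Sym2 V → ℝ)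
    (S : Finset V) : Prop where
  nonempty : S.Nonempty
  density_le : ∀ T : Finset V, T.Nonempty → density G w T ≤ density G w S

section Density

variable {V : Type*} [Fintype V] {G : SimpleGraph V}

theorem edgesIn_subset_edgeFinset (S : Finset V) : edgesIn G S ⊆ G.edgeFinset :=
  filter_subset _ _

theorem card_edgesIn_le_choose_two (S : Finset V) : #(edgesIn G S) ≤ (#S).choose 2 := by
  have edgesIn_subset : edgesIn G S ⊆ S.offDiag.image Sym2.mk.uncurry := by
    intro e he
    induction e using Sym2.ind with
    | _ u v =>
      obtain ⟨huv, hS⟩ := mem_filter.1 he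
      have hne : u ≠ v := (SimpleGraph.mem_edgeFinset.1 huv).ne
      exact mem_image.2 ⟨(u, v), mem_offDiag.2
        ⟨hS u (Sym2.mem_mk_left u v), hS v (Sym2.mem_mk_right u v), hne⟩, rfl⟩
  exact (card_le_card edgesIn_subset).trans_eq (Sym2.card_image_offDiag S)

theorem two_mul_card_edgesIn_le_sq (S : Finset V) : 2 * (#(edgesIn G S) : ℝ) ≤ (#S : ℝ) ^ 2 := by
  have hchoose : (#(edgesIn G S) : ℝ) ≤ #S * (#S - 1) / 2 := by
    rw [← Nat.cast_choose_two]
    exact_mod_cast card_edgesIn_le_choose_two S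
  linarith [Nat.cast_nonneg (α := ℝ) #S]

theorem card_edgesIn_mul_sqrt_le (S : Finset V) :
    #(edgesIn G S) * √(2 / #G.edgeFinset) ≤ #S := by
  have card_ratio_le_one : (#(edgesIn G S) : ℝ) / #G.edgeFinset ≤ 1 :=
    div_le_one_of_le₀ (mod_cast card_le_card (edgesIn_subset_edgeFinset S)) (Nat.cast_nonneg _)
  refine le_of_sq_le_sq ?_ (Nat.cast_nonneg _)
  calc (#(edgesIn G S) * √(2 / #G.edgeFinset)) ^ 2
      = 2 * #(edgesIn G S) * (#(edgesIn G S) / #G.edgeFinset) := by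
        rw [mul_pow, Real.sq_sqrt (by positivity)]
        ring
    _ ≤ 2 * #(edgesIn G S) := mul_le_of_le_one_right (by positivity) card_ratio_le_one
    _ ≤ (#S : ℝ) ^ 2 := two_mul_card_edgesIn_le_sq S

variable {w w' : Sym2 V → ℝ}

theorem density_mono (h : ∀ e ∈ G.edgeFinset, w e ≤ w' e) (S : Finset V) :
    density G w S ≤ density G w' S := by
  unfold density
  gcongr with e he
  exact h e (edgesIn_subset_edgeFinset S he)

theorem density_add_const (w : Sym2 V → ℝ) (c : ℝ) (S : Finset V) :
    density G (fun e => w e + c) S = density G w S + #(edgesIn G S) * c / #S := by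
  simp only [density, sum_add_distrib, sum_const, nsmul_eq_mul, add_div]

theorem density_le_density_add_of_le_add_sqrt_mul {δ : ℝ} (hδ : 0 ≤ δ)
    (h : ∀ e ∈ G.edgeFinset, w' e ≤ w e + √(2 / #G.edgeFinset) * δ) (S : Finset V) :
    density G w' S ≤ density G w S + δ := by
  have excess_le : #(edgesIn G S) * (√(2 / #G.edgeFinset) * δ) / #S ≤ δ := by
    refine div_le_of_le_mul₀ (Nat.cast_nonneg _) hδ ?_
    calc #(edgesIn G S) * (√(2 / #G.edgeFinset) * δ)
        = #(edgesIn G S) * √(2 / #G.edgeFinset) * δ := (mul_assoc _ _ _).symm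
      _ ≤ #S * δ := by gcongr; exact card_edgesIn_mul_sqrt_le S
      _ = δ * #S := mul_comm _ _
  calc density G w' S
      ≤ density G (fun e => w e + √(2 / #G.edgeFinset) * δ) S := density_mono h S
    _ = density G w S + #(edgesIn G S) * (√(2 / #G.edgeFinset) * δ) / #S :=
        density_add_const w _ S
    _ ≤ density G w S + δ := by gcongr

theorem IsDensestSubgraph.density_le_add {S T : Finset V} (hS : IsDensestSubgraph G w S) {δ : ℝ}
    (hδ : 0 ≤ δ) (h : ∀ e ∈ G.edgeFinset, w' e ≤ w e + √(2 / #G.edgeFinset) * δ)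
    (hT : T.Nonempty) : density G w' T ≤ density G w S + δ :=
  (density_le_density_add_of_le_add_sqrt_mul hδ h T).trans (by gcongr; exact hS.density_le T hT)

end Density

theorem sampling_algorithm_robust_ratio_general {V : Type*} [Fintype V] {G : SimpleGraph V}
    {ε D : ℝ} (hε : 0 ≤ ε) (hε1 : ε ≤ 1) (hD : 0 ≤ D) {wm wp w : Sym2 V → ℝ}
    (hDle : ∃ S : Finset V, S.Nonempty ∧ D ≤ density G wp S)
    (hdiff : ∀ e ∈ G.edgeFinset, wp e ≤ wm e + √(2 / #G.edgeFinset) * (ε * D))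
    {Sm : Finset V} (hSm : IsDensestSubgraph G wm Sm)
    (hwmid : ∀ e ∈ G.edgeFinset, wm e ≤ w e ∧ w e ≤ wp e)
    {T : Finset V} (hT : T.Nonempty) :
    (1 - ε) * density G w T ≤ density G w Sm := by
  have hεD : 0 ≤ ε * D := mul_nonneg hε hD
  have lower_bound : (1 - ε) * D ≤ density G wm Sm := by
    obtain ⟨S, hS, hDS⟩ := hDle
    linarith [hSm.density_le_add hεD hdiff hS]
  have upper_bound : density G w T ≤ density G wm Sm + ε * D :=
    (density_mono (fun e he => (hwmid e he).2) T).trans (hSm.density_le_add hεD hdiff hT)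
  calc (1 - ε) * density G w T
      ≤ (1 - ε) * (density G wm Sm + ε * D) :=
        mul_le_mul_of_nonneg_left upper_bound (sub_nonneg.2 hε1)
    _ = (1 - ε) * density G wm Sm + ε * ((1 - ε) * D) := by ring
    _ ≤ (1 - ε) * density G wm Sm + ε * density G wm Sm := by gcongr
    _ = density G wm Sm := by ring
    _ ≤ density G w Sm := density_mono (fun e he => (hwmid e he).1) Sm

/-- Suppose `m = |E| ≥ 1`, `ε ∈ (0,1)`, `0 ≤ w⁻ ≤ w⁺` edgewise, and
`‖w⁺ − w⁻‖_∞ ≤ √(2/m) · ε · D`, where `0 < D` and `D` is at most the optimal density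
with respect to `w⁺` (witnessed by some nonempty subset). If `S⁻` is a densest subgraph
with respect to `w⁻`, then for every weight vector `w` with `w⁻ ≤ w ≤ w⁺` edgewise and
every nonempty `T ⊆ V`, `f_w(S⁻) ≥ (1 − ε) · f_w(T)`; that is, the robust ratio of
`S⁻` under the edge-weight space `∏ₑ[w⁻ₑ, w⁺ₑ]` is at least `1 − ε`. -/
theorem sampling_algorithm_robust_ratio {V : Type*} [Fintype V] (G : SimpleGraph V)
    (hm : 1 ≤ G.edgeFinset.card) (ε : ℝ) (hε : 0 < ε) (hε1 : ε < 1)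
    (wm wp : Sym2 V → ℝ)
    (hw : ∀ e ∈ G.edgeFinset, 0 ≤ wm e ∧ wm e ≤ wp e)
    (D : ℝ) (hD : 0 < D)
    (hDle : ∃ S : Finset V, S.Nonempty ∧ D ≤ density G wp S)
    (hdiff : ∀ e ∈ G.edgeFinset,
      |wp e - wm e| ≤ Real.sqrt (2 / (G.edgeFinset.card : ℝ)) * ε * D)
    (Sm : Finset V) (hSm : Sm.Nonempty)
    (hSmOpt : ∀ T : Finset V, T.Nonempty → density G wm T ≤ density G wm Sm)
    (w : Sym2 V → ℝ) (hwmid : ∀ e ∈ G.edgeFinset, wm e ≤ w e ∧ w e ≤ wp e)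
    (T : Finset V) (hT : T.Nonempty) :
    (1 - ε) * density G w T ≤ density G w Sm :=
  sampling_algorithm_robust_ratio_general hε.le hε1.le hD.le hDle
    (fun e he => by linarith [le_of_abs_le (hdiff e he)]) ⟨hSm, hSmOpt⟩ hwmid hT
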